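/- For every x in the stadium S_0, the distance from x to the complement of S_0 equals 1 minus the distance from x to the segment L; that is, infDist(x, S_0ᶜ) = 1 − infDist(x, L) for all x ∈ S_0. -/

import Mathlib

/-!
The stadium is an open thickening of the segment, because convex hulls commute with Minkowski sums.
For a convex set `K` contained in a closed hyperplane, every point `x` has a nonzero continuous
functional `f` whose increase from `K` to `x` is at least `‖f‖ * infDist x K`: off the closure of
`K` it comes from Hahn-Banach separation of `x` from a thickening of `K`, and on the closure it
defines the hyperplane. The `δ`-thickening of `K` lies in a half-space of `f` whose boundary is at
distance `δ - infDist x K` from `x`, which bounds the distance to the complement above;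
the bound below is the triangle inequality.
-/

/-- The point `(a, b)` in the Euclidean plane. -/
noncomputable def pt (a b : ℝ) : EuclideanSpace ℝ (Fin 2) :=
  (WithLp.equiv 2 (Fin 2 → ℝ)).symm ![a, b]

/-- For `ε ≥ 0`, the set `S ε` is the convex hull of the union of the open ball of radius
`1 + ε` centered at `(-1, 0)` and the open ball of radius `1` centered at `(1, 0)`.
`S 0` is the stadium. -/
noncomputable def S (ε : ℝ) : Set (EuclideanSpace ℝ (Fin 2)) :=
  convexHull ℝ (Metric.ball (pt (-1) 0) (1 + ε) ∪ Metric.ball (pt 1 0) 1)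

/-- The closed segment from `(-1, 0)` to `(1, 0)`. -/
noncomputable def L : Set (EuclideanSpace ℝ (Fin 2)) := segment ℝ (pt (-1) 0) (pt 1 0)

open Metric
open scoped Pointwise

theorem sub_infDist_le_infDist_compl_thickening {X : Type*} [PseudoMetricSpace X] {K : Set X}
    {δ : ℝ} (hK : K.Nonempty) (hcompl : (thickening δ K)ᶜ.Nonempty) (x : X) :
    δ - infDist x K ≤ infDist x (thickening δ K)ᶜ := by
  refine (le_infDist hcompl).2 fun z hz => ?_
  have hδ : δ ≤ infDist z K := by
    rwa [Set.mem_compl_iff, mem_thickening_iff_infDist_lt hK, not_lt] at hz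
  linarith [infDist_le_infDist_add_dist (s := K) (x := z) (y := x), dist_comm z x]

section NormedSpace

variable {E : Type*} [NormedAddCommGroup E] [NormedSpace ℝ E]

theorem convexHull_thickening (δ : ℝ) (s : Set E) :
    convexHull ℝ (thickening δ s) = thickening δ (convexHull ℝ s) := by
  rw [← add_ball_zero, convexHull_add, (convex_ball 0 δ).convexHull_eq, add_ball_zero]

theorem convexHull_ball_union_ball (a b : E) (δ : ℝ) :
    convexHull ℝ (ball a δ ∪ ball b δ) = thickening δ (segment ℝ a b) := by
  rw [← convexHull_pair, ← convexHull_thickening, thickening_eq_biUnion_ball, Set.biUnion_pair]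

theorem apply_add_opNorm_mul_le_of_ball {f : StrongDual ℝ E} {x : E} {r c : ℝ} (hr : 0 < r)
    (hf : ∀ z ∈ ball x r, f z ≤ c) : f x + ‖f‖ * r ≤ c := by
  have hunit : ∀ v ∈ ball (0 : E) 1, f v ≤ (c - f x) / r := fun v hv => by
    have hball : x + r • v ∈ ball x r := by
      rw [mem_ball_zero_iff] at hv
      rw [mem_ball_iff_norm, add_sub_cancel_left, norm_smul_of_nonneg hr.le]
      exact mul_lt_of_lt_one_right hr hv
    have hbound := hf _ hball
    rw [map_add, map_smul, smul_eq_mul] at hbound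
    rw [le_div_iff₀ hr]
    linarith
  have hnorm : ‖f‖ ≤ (c - f x) / r := by
    rw [← f.sSup_unit_ball_eq_norm]
    refine csSup_le ((nonempty_ball.2 one_pos).image _) ?_
    rintro _ ⟨v, hv, rfl⟩
    refine abs_le'.2 ⟨hunit v hv, ?_⟩
    rw [← map_neg]
    exact hunit (-v) (by simpa using hv)
  rw [le_div_iff₀ hr] at hnorm
  linarith

theorem le_sub_infDist_of_ball_subset_thickening {f : StrongDual ℝ E} {K : Set E} {x : E} {r δ : ℝ}
    (hf₀ : f ≠ 0) (hf : ∀ y ∈ K, f y + ‖f‖ * infDist x K ≤ f x) (hr : 0 < r)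
    (hsub : ball x r ⊆ thickening δ K) : r ≤ δ - infDist x K := by
  have hhalf : ∀ z ∈ ball x r, f z ≤ f x + ‖f‖ * (δ - infDist x K) := fun z hz => by
    obtain ⟨y, hy, hzy⟩ := mem_thickening_iff.1 (hsub hz)
    calc f z = f y + f (z - y) := by rw [map_sub]; ring
      _ ≤ f y + ‖f‖ * ‖z - y‖ := by gcongr; exact (le_abs_self _).trans (f.le_opNorm _)
      _ ≤ f y + ‖f‖ * δ := by rw [← dist_eq_norm]; gcongr
      _ ≤ f x + ‖f‖ * (δ - infDist x K) := by linarith [hf y hy]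
  have hmul : ‖f‖ * r ≤ ‖f‖ * (δ - infDist x K) :=
    le_of_add_le_add_left (apply_add_opNorm_mul_le_of_ball hr hhalf)
  exact le_of_mul_le_mul_left hmul (norm_pos_iff.2 hf₀)

theorem infDist_compl_thickening_of_dual {f : StrongDual ℝ E} {K : Set E} {x : E} {δ : ℝ}
    (hf₀ : f ≠ 0) (hf : ∀ y ∈ K, f y + ‖f‖ * infDist x K ≤ f x) (hx : x ∈ thickening δ K) :
    infDist x (thickening δ K)ᶜ = δ - infDist x K := by
  have hK : K.Nonempty := (mem_thickening_iff.1 hx).imp fun _ => And.left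
  have hlt : infDist x K < δ := (mem_thickening_iff_infDist_lt hK).1 hx
  have hcompl : (thickening δ K)ᶜ.Nonempty := by
    rw [Set.nonempty_compl]
    intro huniv
    have hle := le_sub_infDist_of_ball_subset_thickening (r := δ - infDist x K + 1) hf₀ hf
      (by linarith) (huniv ▸ Set.subset_univ _)
    linarith
  refine le_antisymm ?_ (sub_infDist_le_infDist_compl_thickening hK hcompl x)
  rcases (infDist_nonneg (x := x) (s := (thickening δ K)ᶜ)).eq_or_lt with hzero | hpos
  · exact hzero ▸ (sub_pos.2 hlt).le
  · exact le_sub_infDist_of_ball_subset_thickening hf₀ hf hpos ball_infDist_compl_subset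

theorem exists_dual_ne_zero_eq_zero_of_not_dense {p : Submodule ℝ E} (hp : ¬ Dense (p : Set E)) :
    ∃ f : StrongDual ℝ E, f ≠ 0 ∧ ∀ v ∈ p, f v = 0 := by
  obtain ⟨x, hx⟩ : ∃ x, x ∉ closure (p : Set E) := not_forall.1 hp
  obtain ⟨f, c, hfx, hfp⟩ := geometric_hahn_banach_point_closed p.convex.closure isClosed_closure hx
  have hp_zero : ∀ v ∈ p, f v = 0 := fun v hv => by
    by_contra hfv
    have hlt := hfp _ (subset_closure (p.smul_mem (c / f v) hv))
    rw [map_smul, smul_eq_mul, div_mul_cancel₀ _ hfv] at hlt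
    exact hlt.false
  refine ⟨f, ?_, hp_zero⟩
  rintro rfl
  exact (hfx.trans (hfp 0 (subset_closure p.zero_mem))).false

theorem exists_dual_add_opNorm_mul_infDist_le_of_pos {K : Set E} {x : E} (hK : Convex ℝ K)
    (hpos : 0 < infDist x K) :
    ∃ f : StrongDual ℝ E, f ≠ 0 ∧ ∀ y ∈ K, f y + ‖f‖ * infDist x K ≤ f x := by
  have hne : K.Nonempty := by
    by_contra! rfl
    simp at hpos
  have hx : x ∉ thickening (infDist x K) K := by simp [mem_thickening_iff_infDist_lt hne]
  obtain ⟨f, hf⟩ := geometric_hahn_banach_open_point (hK.thickening _) isOpen_thickening hx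
  refine ⟨f, ?_, fun y hy => apply_add_opNorm_mul_le_of_ball hpos fun z hz =>
    (hf z (ball_subset_thickening hy _ hz)).le⟩
  rintro rfl
  obtain ⟨y, hy⟩ := hne
  exact (hf y (self_subset_thickening hpos K hy)).false

theorem exists_dual_add_opNorm_mul_infDist_le {K : Set E} (hK : Convex ℝ K)
    (hspan : ¬ Dense (vectorSpan ℝ K : Set E)) (x : E) :
    ∃ f : StrongDual ℝ E, f ≠ 0 ∧ ∀ y ∈ K, f y + ‖f‖ * infDist x K ≤ f x := by
  rcases (infDist_nonneg (x := x) (s := K)).eq_or_lt' with hzero | hpos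
  · obtain ⟨f, hf₀, hf⟩ := exists_dual_ne_zero_eq_zero_of_not_dense hspan
    refine ⟨f, hf₀, fun y hy => ?_⟩
    have hconst : K ⊆ {z | f z = f y} := fun z hz =>
      sub_eq_zero.1 ((map_sub f z y).symm.trans (hf _ (vsub_mem_vectorSpan ℝ hz hy)))
    have hx : x ∈ closure K := (mem_closure_iff_infDist_zero ⟨y, hy⟩).2 hzero
    have hfx : f x = f y := closure_minimal hconst (isClosed_eq f.continuous continuous_const) hx
    rw [hzero, hfx, mul_zero, add_zero]
  · exact exists_dual_add_opNorm_mul_infDist_le_of_pos hK hpos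

theorem infDist_compl_thickening {K : Set E} {x : E} {δ : ℝ} (hK : Convex ℝ K)
    (hspan : ¬ Dense (vectorSpan ℝ K : Set E)) (hx : x ∈ thickening δ K) :
    infDist x (thickening δ K)ᶜ = δ - infDist x K := by
  obtain ⟨f, hf₀, hf⟩ := exists_dual_add_opNorm_mul_infDist_le hK hspan x
  exact infDist_compl_thickening_of_dual hf₀ hf hx

theorem not_dense_vectorSpan_segment (hE : 1 < Module.rank ℝ E) (a b : E) :
    ¬ Dense (vectorSpan ℝ (segment ℝ a b) : Set E) := by
  rw [vectorSpan_segment]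
  intro hdense
  have htop : (ℝ ∙ (b -ᵥ a)) = ⊤ := by
    rw [← SetLike.coe_set_eq, Submodule.top_coe, ← hdense.closure_eq]
    exact (Submodule.closed_of_finiteDimensional _).closure_eq.symm
  have hrank : Module.rank ℝ E ≤ 1 := by
    rw [← rank_top ℝ E, ← htop]
    exact (rank_span_le _).trans_eq (Cardinal.mk_singleton _)
  exact hE.not_ge hrank

theorem stmt_9_general (hE : 1 < Module.rank ℝ E) {a b x : E} {δ : ℝ}
    (hx : x ∈ convexHull ℝ (ball a δ ∪ ball b δ)) :
    infDist x (convexHull ℝ (ball a δ ∪ ball b δ))ᶜ = δ - infDist x (segment ℝ a b) := by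
  rw [convexHull_ball_union_ball] at hx ⊢
  exact infDist_compl_thickening (convex_segment a b) (not_dense_vectorSpan_segment hE a b) hx

end NormedSpace

theorem stmt_9 : ∀ x ∈ S 0, Metric.infDist x (S 0)ᶜ = 1 - Metric.infDist x L := by
  have hrank : 1 < Module.rank ℝ (EuclideanSpace ℝ (Fin 2)) := by simp [← Module.finrank_eq_rank]
  simpa only [S, L, add_zero] using fun x hx => stmt_9_general hrank (x := x) hx
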